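/- arXiv:0911.5728 — 5 statements merged into one kernel-verified Lean document; each statement's English description precedes it below -/
import Mathlib

section
/- Let A, B, C, A', B', C' be abelian groups, and let f : A → B, g : B → C, d : C → ℤ, f' : A' → B', g' : B' → C', d' : C' → ℤ, β : B → B', γ : C → C', s_A : A' → A, s_B : B' → B, σ : ℤ → C, σ' : ℤ → C' be group homomorphisms satisfying: (i) g ∘ f = 0; (ii) ker g' ⊆ im f'; (iii) ker d' ⊆ im g'; (iv) d' ∘ σ' = id_ℤ; (v) γ ∘ σ = σ'; (vi) γ ∘ g = g' ∘ β; (vii) β ∘ s_B = id_{B'}; (viii) s_B ∘ f' = f ∘ s_A. Then there exists a group homomorphism s_C : C' → C such that γ ∘ s_C = id_{C'}. -/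
/-!
The section `σ'` of `d'` splits `C'` as `ker d' ⊕ ℤ`, and `ker d'` is contained in the image of `g'`.
By exactness at `B'` and commutation of the sections with `f`, `f'`, the map `g ∘ sB` kills
`ker g'`, so it descends to the image of `g'`. Using this descended map on `ker d'` and `σ` on `ℤ`
gives the section of `γ`: it sends `c'` to `g (sB b') + σ (d' c')` for any `b'` with
`g' b' = c' - σ' (d' c')`.
-/

/-- Abstract diagram chase: given two four-term exact-type rows of abelian groups
ending in a degree map to `ℤ`, downward vertical maps, compatible upward sections
on the first two columns, and compatible sections of the degree maps, there is a
section of the third vertical map. -/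
theorem section_of_third_vertical_map
    {A B C A' B' C' : Type*} [AddCommGroup A] [AddCommGroup B] [AddCommGroup C]
    [AddCommGroup A'] [AddCommGroup B'] [AddCommGroup C']
    (f : A →+ B) (g : B →+ C) (d : C →+ ℤ)
    (f' : A' →+ B') (g' : B' →+ C') (d' : C' →+ ℤ)
    (β : B →+ B') (γ : C →+ C')
    (sA : A' →+ A) (sB : B' →+ B) (σ : ℤ →+ C) (σ' : ℤ →+ C')
    (h1 : ∀ a : A, g (f a) = 0)
    (h2 : ∀ b' : B', g' b' = 0 → ∃ a' : A', f' a' = b')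
    (h3 : ∀ c' : C', d' c' = 0 → ∃ b' : B', g' b' = c')
    (h4 : ∀ n : ℤ, d' (σ' n) = n)
    (h5 : ∀ n : ℤ, γ (σ n) = σ' n)
    (h6 : ∀ b : B, γ (g b) = g' (β b))
    (h7 : ∀ b' : B', β (sB b') = b')
    (h8 : ∀ a' : A', sB (f' a') = f (sA a')) :
    ∃ sC : C' →+ C, ∀ c' : C', γ (sC c') = c' := by
  have hker : ∀ b' : B', g' b' = 0 → g (sB b') = 0 := by
    intro b' hb'
    obtain ⟨a', rfl⟩ := h2 b' hb'
    rw [h8, h1]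
  -- `c' - σ' (d' c')` is the component of `c'` in `ker d'`; lift it to `B'` along `g'`.
  have hlift : ∀ c' : C', ∃ b' : B', g' b' = c' - σ' (d' c') := fun c' =>
    h3 _ (by rw [map_sub, h4, sub_self])
  choose b hb using hlift
  refine ⟨AddMonoidHom.mk' (fun c' => g (sB (b c')) + σ (d' c')) ?_, ?_⟩
  · intro x y
    -- The chosen lifts are additive up to `ker g'`, which `g ∘ sB` kills.
    have h := hker (b (x + y) - (b x + b y)) (by
      simp only [map_sub, map_add, hb]
      abel)
    simp only [map_sub, map_add, sub_eq_zero] at h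
    simp only [map_add, h]
    abel
  · intro c'
    simp only [AddMonoidHom.mk'_apply, map_add, h5, h6, h7, hb, sub_add_cancel]
end

section
/- Let G be a group and let A, B, C, A', B', C' be abelian groups each equipped with an additive G-action (i.e., G acts by group automorphisms). Let f : A → B, g : B → C, f' : A' → B', g' : B' → C', β : B → B', γ : C → C', s_A : A' → A, s_B : B' → B be G-equivariant group homomorphisms, let d : C → ℤ and d' : C' → ℤ be group homomorphisms which are G-invariant (d(τ•c) = d(c) and d'(τ•c') = d'(c') for all τ ∈ G), and let σ : ℤ → C, σ' : ℤ → C' be group homomorphisms whose images consist of G-fixed elements (τ•σ(n) = σ(n) and τ•σ'(n) = σ'(n) for all τ ∈ G, n ∈ ℤ). Assume: (i) g ∘ f = 0; (ii) ker g' ⊆ im f'; (iii) ker d' ⊆ im g'; (iv) d' ∘ σ' = id_ℤ; (v) γ ∘ σ = σ'; (vi) γ ∘ g = g' ∘ β; (vii) β ∘ s_B = id_{B'}; (viii) s_B ∘ f' = f ∘ s_A. Then there exists a G-equivariant group homomorphism s_C : C' → C such that γ ∘ s_C = id_{C'}. -/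
/-!
Every `c'` splits as
`(c' - σ' (d' c')) + σ' (d' c')`, where the first summand lies in `ker d' ⊆ im g'`. Pick `b'` with
`g' b' = c' - σ' (d' c')` and put `sC c' = g (sB b') + σ (d' c')`. Two choices of `b'` differ by an
element of `ker g' ⊆ im f'`, and `g ∘ sB ∘ f' = g ∘ f ∘ sA = 0`, so `g (sB b')` does not depend on
the choice; this independence is what makes `sC` additive and equivariant.
-/

/-- Galois-equivariant diagram chase: given two four-term exact-type rows of
`G`-modules ending in a `G`-invariant degree map to `ℤ`, downward `G`-equivariant
vertical maps, compatible `G`-equivariant upward sections on the first two columns,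
and compatible sections of the degree maps landing in `G`-fixed elements, there is a
`G`-equivariant section of the third vertical map. -/
theorem equivariant_section_of_third_vertical_map
    {G : Type*} [Group G]
    {A B C A' B' C' : Type*} [AddCommGroup A] [AddCommGroup B] [AddCommGroup C]
    [AddCommGroup A'] [AddCommGroup B'] [AddCommGroup C']
    [DistribMulAction G A] [DistribMulAction G B] [DistribMulAction G C]
    [DistribMulAction G A'] [DistribMulAction G B'] [DistribMulAction G C']
    (f : A →+ B) (g : B →+ C) (d : C →+ ℤ)
    (f' : A' →+ B') (g' : B' →+ C') (d' : C' →+ ℤ)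
    (β : B →+ B') (γ : C →+ C')
    (sA : A' →+ A) (sB : B' →+ B) (σ : ℤ →+ C) (σ' : ℤ →+ C')
    (hf : ∀ (τ : G) (a : A), f (τ • a) = τ • f a)
    (hg : ∀ (τ : G) (b : B), g (τ • b) = τ • g b)
    (hf' : ∀ (τ : G) (a' : A'), f' (τ • a') = τ • f' a')
    (hg' : ∀ (τ : G) (b' : B'), g' (τ • b') = τ • g' b')
    (hβ : ∀ (τ : G) (b : B), β (τ • b) = τ • β b)
    (hγ : ∀ (τ : G) (c : C), γ (τ • c) = τ • γ c)
    (hsA : ∀ (τ : G) (a' : A'), sA (τ • a') = τ • sA a')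
    (hsB : ∀ (τ : G) (b' : B'), sB (τ • b') = τ • sB b')
    (hd : ∀ (τ : G) (c : C), d (τ • c) = d c)
    (hd' : ∀ (τ : G) (c' : C'), d' (τ • c') = d' c')
    (hσ : ∀ (τ : G) (n : ℤ), τ • σ n = σ n)
    (hσ' : ∀ (τ : G) (n : ℤ), τ • σ' n = σ' n)
    (h1 : ∀ a : A, g (f a) = 0)
    (h2 : ∀ b' : B', g' b' = 0 → ∃ a' : A', f' a' = b')
    (h3 : ∀ c' : C', d' c' = 0 → ∃ b' : B', g' b' = c')
    (h4 : ∀ n : ℤ, d' (σ' n) = n)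
    (h5 : ∀ n : ℤ, γ (σ n) = σ' n)
    (h6 : ∀ b : B, γ (g b) = g' (β b))
    (h7 : ∀ b' : B', β (sB b') = b')
    (h8 : ∀ a' : A', sB (f' a') = f (sA a')) :
    ∃ sC : C' →+ C, (∀ (τ : G) (c' : C'), sC (τ • c') = τ • sC c') ∧
      ∀ c' : C', γ (sC c') = c' := by
  -- `g ∘ sB` factors through `g'`
  have key : ∀ x y : B', g' x = g' y → g (sB x) = g (sB y) := by
    intro x y hxy
    obtain ⟨a', ha'⟩ := h2 (x - y) (by rw [map_sub, hxy, sub_self])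
    rw [← sub_eq_zero, ← map_sub, ← map_sub, ← ha', h8, h1]
  have hlift : ∀ c' : C', ∃ b' : B', g' b' = c' - σ' (d' c') := fun c' =>
    h3 _ (by rw [map_sub, h4, sub_self])
  choose p hp using hlift
  refine ⟨AddMonoidHom.mk' (fun c' => g (sB (p c')) + σ (d' c')) ?_, ?_, ?_⟩
  · intro x y
    have h : g (sB (p (x + y))) = g (sB (p x + p y)) := by
      apply key
      simp only [map_add, hp]
      abel
    simp only [h, map_add]
    abel
  · intro τ c'
    have h : g (sB (p (τ • c'))) = g (sB (τ • p c')) := by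
      apply key
      rw [hg', hp, hp, smul_sub, hd', hσ']
    simp only [AddMonoidHom.mk'_apply, h, hsB, hg, hd', smul_add, hσ]
  · intro c'
    simp only [AddMonoidHom.mk'_apply, map_add, h6, h7, hp, h5, sub_add_cancel]
end

section
/- Let k be a field of characteristic different from 2, and let P_∞, P_0 ∈ k[X] be relatively prime separable polynomials of degree 4. Then the set { t ∈ k : the polynomial t²·P_∞ + P_0 is not separable } is finite. -/
/-!
If `t² P∞ + P₀` is not separable, it shares a root `x` in an algebraic closure with its derivative
`t² P∞' + P₀'`. Eliminating `t²`, the point `x` is a root of the Wronskian `P∞ P₀' - P∞' P₀`.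
The Wronskian is nonzero: otherwise `P∞` divides `P∞' P₀`, while it is coprime to both factors,
so it would be a unit. Hence there are finitely many such `x`. Since `P∞` and `P₀` have no common
root, `P∞(x) ≠ 0`, so each `x` determines `t² = -P₀(x) / P∞(x)` and allows at most two values of `t`.
-/

open Polynomial in
lemma wronskian_ne_zero_of_separable {k : Type*} [Field k] {P Q : k[X]}
    (hcop : IsCoprime P Q) (hsep : P.Separable) (hdeg : P.natDegree ≠ 0) :
    wronskian P Q ≠ 0 := by
  intro h
  have hdvd : P ∣ derivative P * Q := ⟨derivative Q, (sub_eq_zero.mp h).symm⟩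
  have hunit : IsUnit P := (IsCoprime.mul_right hsep hcop).isUnit_of_dvd' dvd_rfl hdvd
  exact hdeg (natDegree_eq_zero_of_isUnit hunit)

/-- For relatively prime separable degree-4 polynomials `P∞, P₀` over a field of
characteristic `≠ 2`, the set of `t` for which `t² P∞ + P₀` fails to be separable
is finite. -/
theorem finite_nonseparable_locus {k : Type*} [Field k] (hchar : ringChar k ≠ 2)
    (Pinf P0 : Polynomial k)
    (hcop : IsCoprime Pinf P0)
    (hsepInf : Pinf.Separable) (hsep0 : P0.Separable)
    (hdegInf : Pinf.natDegree = 4) (hdeg0 : P0.natDegree = 4) :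
    {t : k | ¬ (Polynomial.C (t ^ 2) * Pinf + P0).Separable}.Finite := by
  open Polynomial in
  have hW := wronskian_ne_zero_of_separable hcop hsepInf (by omega)
  let K := AlgebraicClosure k
  have hsq (c : K) : {t : k | algebraMap k K t ^ 2 = c}.Finite := by
    have hfin : {y : K | y ^ 2 = c}.Finite := by
      classical
      refine ((nthRoots 2 c).toFinset.finite_toSet).subset fun y hy => ?_
      simpa [mem_nthRoots] using hy
    exact hfin.preimage (algebraMap k K).injective.injOn
  refine (((wronskian Pinf P0).rootSet_finite K).biUnion
    fun x _ => hsq (-aeval x P0 / aeval x Pinf)).subset fun t ht => ?_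
  rw [Set.mem_ofPred_eq, Separable, derivative_add, derivative_C_mul,
    isCoprime_iff_aeval_ne_zero_of_isAlgClosed k K] at ht
  push Not at ht
  obtain ⟨x, h0, h1⟩ := ht
  simp only [map_add, map_mul, aeval_C, map_pow] at h0 h1
  have hP : aeval x Pinf ≠ 0 := by
    intro hP
    have hQ : aeval x P0 = 0 := by simpa [hP] using h0
    exact ((isCoprime_iff_aeval_ne_zero_of_isAlgClosed k K _ _).mp hcop x).elim
      (· hP) (· hQ)
  refine Set.mem_biUnion (x := x) ?_ ?_
  · rw [mem_rootSet]
    refine ⟨hW, ?_⟩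
    simp only [wronskian, map_sub, map_mul]
    linear_combination aeval x Pinf * h1 - aeval x (derivative Pinf) * h0
  · rw [Set.mem_ofPred_eq, eq_div_iff hP]
    linear_combination h0
end

section
/- There do not exist rational numbers x, y, z such that y² + z² = (x² − 2)(3 − x²). -/
/-!
Write `x = m / n` in lowest terms and put `A = m² - 2n²`, `B = 3n² - m²`. Since `A + B = n²` and
`3A + 2B = m²`, the integers `A` and `B` are coprime. A rational point makes `A * B * d²` a sum of
two integer squares for some `d ≠ 0`; hence `A` and `B` are nonnegative, and each is itself a sum of
two squares because every prime `q ≡ 3 (mod 4)` divides at most one of them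
(`sum_two_squares_of_coprime_mul`). But whatever the parities of `m` and `n`, not both even, one of
`A`, `B` is `3` modulo `4`, which no sum of two squares is.
-/

/-- A factor of a sum of two squares that is coprime to its cofactor, up to a nonzero square, is
a sum of two squares: the valuations at primes `q ≡ 3 (mod 4)` stay even. -/
lemma sum_two_squares_of_coprime_mul {a b d : ℕ} (hab : a.Coprime b) (hd : d ≠ 0)
    (h : ∃ x y, a * b * d ^ 2 = x ^ 2 + y ^ 2) : ∃ x y, a = x ^ 2 + y ^ 2 := by
  rcases eq_or_ne a 0 with rfl | ha
  · exact ⟨0, 0, rfl⟩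
  rcases eq_or_ne b 0 with rfl | hb
  · exact ⟨1, 0, by simpa using hab⟩
  rw [Nat.eq_sq_add_sq_iff] at h ⊢
  intro q hq hq4
  have hp := Nat.prime_of_mem_primeFactors hq
  have hqa := Nat.dvd_of_mem_primeFactors hq
  have : Fact q.Prime := ⟨hp⟩
  have hqb : ¬ q ∣ b := fun hqb => hp.one_lt.ne' (Nat.eq_one_of_dvd_coprimes hab hqa hqb)
  have hd2 : d ^ 2 ≠ 0 := pow_ne_zero 2 hd
  have hv := h q (Nat.mem_primeFactors.2
    ⟨hp, (hqa.mul_right b).mul_right _, mul_ne_zero (mul_ne_zero ha hb) hd2⟩) hq4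
  rw [padicValNat.mul (mul_ne_zero ha hb) hd2, padicValNat.mul ha hb, padicValNat.pow,
    padicValNat.eq_zero_of_not_dvd hqb] at hv
  grind

lemma sq_add_sq_emod_four_ne_three (x y : ℕ) : ((x : ℤ) ^ 2 + (y : ℤ) ^ 2) % 4 ≠ 3 := by
  rcases Int.even_or_odd' (x : ℤ) with ⟨k, hk | hk⟩ <;>
  rcases Int.even_or_odd' (y : ℤ) with ⟨l, hl | hl⟩ <;>
  rw [hk, hl] <;> ring_nf <;> omega

/-- Iskovskikh's example: the equation `y² + z² = (x² − 2)(3 − x²)` has no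
rational solutions. -/
theorem no_rational_points_iskovskikh :
    ¬ ∃ x y z : ℚ, y ^ 2 + z ^ 2 = (x ^ 2 - 2) * (3 - x ^ 2) := by
  rintro ⟨x, y, z, h⟩
  obtain ⟨m, n, hn, hmn, rfl⟩ : ∃ m n : ℤ, n ≠ 0 ∧ IsCoprime m n ∧ x = m / n :=
    ⟨x.num, x.den, by exact_mod_cast x.den_ne_zero, Rat.isCoprime_num_den x,
      by exact_mod_cast (Rat.num_div_den x).symm⟩
  obtain ⟨d, hd, u, v, huv⟩ : ∃ d : ℕ, d ≠ 0 ∧ ∃ u v : ℤ,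
      (m ^ 2 - 2 * n ^ 2) * (3 * n ^ 2 - m ^ 2) * (d : ℤ) ^ 2 = u ^ 2 + v ^ 2 := by
    refine ⟨y.den * z.den, mul_ne_zero y.den_ne_zero z.den_ne_zero,
      y.num * z.den * n ^ 2, z.num * y.den * n ^ 2, ?_⟩
    have hnQ : (n : ℚ) ≠ 0 := by exact_mod_cast hn
    have hy : (y.num : ℚ) = y * y.den := (Rat.mul_den_eq_num y).symm
    have hz : (z.num : ℚ) = z * z.den := (Rat.mul_den_eq_num z).symm
    have key : ((m : ℚ) ^ 2 - 2 * n ^ 2) * (3 * n ^ 2 - m ^ 2) = (y ^ 2 + z ^ 2) * n ^ 4 := by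
      rw [h]; field_simp
    have : (((m : ℚ) ^ 2 - 2 * n ^ 2) * (3 * n ^ 2 - m ^ 2) * (y.den * z.den) ^ 2 : ℚ)
        = (y.num * z.den * n ^ 2) ^ 2 + (z.num * y.den * n ^ 2) ^ 2 := by
      rw [key, hy, hz]; ring
    exact_mod_cast this
  obtain ⟨A, hA⟩ : ∃ A, A = m ^ 2 - 2 * n ^ 2 := ⟨_, rfl⟩
  obtain ⟨B, hB⟩ : ∃ B, B = 3 * n ^ 2 - m ^ 2 := ⟨_, rfl⟩
  rw [← hA, ← hB] at huv
  have hcop : IsCoprime A B := by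
    obtain ⟨s, t, hst⟩ : IsCoprime (m ^ 2) (n ^ 2) := hmn.pow
    exact ⟨3 * s + t, 2 * s + t, by rw [hA, hB]; linear_combination hst⟩
  have hAB : 0 ≤ A * B := by
    have hd2 : 0 < (d : ℤ) ^ 2 := by positivity
    exact nonneg_of_mul_nonneg_left (by rw [huv]; positivity) hd2
  have hsum : 0 < A + B := by
    have : A + B = n ^ 2 := by rw [hA, hB]; ring
    rw [this]; positivity
  have hA0 : 0 ≤ A := by by_contra! hneg; nlinarith
  have hB0 : 0 ≤ B := by by_contra! hneg; nlinarith
  lift A to ℕ using hA0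
  lift B to ℕ using hB0
  have hcop' : A.Coprime B := Nat.isCoprime_iff_coprime.1 hcop
  have huv' : A * B * d ^ 2 = u.natAbs ^ 2 + v.natAbs ^ 2 := by
    zify; simpa using huv
  obtain ⟨a, a', ha⟩ := sum_two_squares_of_coprime_mul hcop' hd ⟨_, _, huv'⟩
  obtain ⟨b, b', hb⟩ := sum_two_squares_of_coprime_mul hcop'.symm hd
    ⟨_, _, by rw [mul_comm B A]; exact huv'⟩
  have hA3 := sq_add_sq_emod_four_ne_three a a'
  have hB3 := sq_add_sq_emod_four_ne_three b b'
  rw [show (a : ℤ) ^ 2 + (a' : ℤ) ^ 2 = m ^ 2 - 2 * n ^ 2 by rw [← hA, ha]; push_cast; rfl] at hA3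
  rw [show (b : ℤ) ^ 2 + (b' : ℤ) ^ 2 = 3 * n ^ 2 - m ^ 2 by rw [← hB, hb]; push_cast; rfl] at hB3
  rcases Int.even_or_odd' m with ⟨k, hk | hk⟩ <;> rcases Int.even_or_odd' n with ⟨l, hl | hl⟩
  -- `m` and `n` both even is excluded by coprimality
  · obtain ⟨s, t, hst⟩ := hmn
    have h2 : 2 * (s * k + t * l) = 1 := by rw [← hst, hk, hl]; ring
    omega
  all_goals
    rw [hk, hl] at hA3 hB3
    ring_nf at hA3 hB3
    omega
end

section
/- For every prime number p there exist x, y, z in the field ℚ_p of p-adic numbers such that y² + z² = (x² − 2)(3 − x²); moreover there exist x, y, z ∈ ℝ such that y² + z² = (x² − 2)(3 − x²). -/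
/-!
Over `ℝ` a point with `x² = 5/2` works. Over `ℚ_[p]` with `p` odd, take `x = 1`: the right-hand side
is `-2`, a unit, so it is a sum of two squares modulo `p`, not both zero, and
Hensel's lemma (`exists_sq_eq_of_norm_lt`) lifts the nonzero one. Over `ℚ_[2]` take `x = 0` and
`y = 1`: what remains is `z² = -7`, which is solvable since `-7 ≡ 1` modulo `8`.
-/

/-- Hensel's lemma for the polynomial `X ^ 2 - c`. -/
lemma exists_sq_eq_of_norm_lt {p : ℕ} [Fact p.Prime] (c a : ℤ_[p])
    (h : ‖a ^ 2 - c‖ < ‖2 * a‖ ^ 2) : ∃ z : ℤ_[p], z ^ 2 = c := by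
  obtain ⟨z, hz, -⟩ := hensels_lemma (p := p)
    (F := (Polynomial.X ^ 2 - Polynomial.C c : Polynomial ℤ_[p])) (a := a)
    (by simpa [Polynomial.derivative_X_pow, one_add_one_eq_two] using h)
  exact ⟨z, by simpa [sub_eq_zero] using hz⟩

lemma exists_sq_add_sq_eq_neg_two {p : ℕ} [Fact p.Prime] (hp : p ≠ 2) :
    ∃ y z : ℤ_[p], y ^ 2 + z ^ 2 = -2 := by
  have hpp : p.Prime := Fact.out
  have h2 : ¬ (p : ℤ) ∣ 2 := fun h => hp <|
    (Nat.prime_dvd_prime_iff_eq hpp Nat.prime_two).1 (by exact_mod_cast h)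
  -- The nonzero one of the two residues is the one that gets lifted.
  have key : ∀ a b : ℤ, (p : ℤ) ∣ a ^ 2 + b ^ 2 + 2 → ¬ (p : ℤ) ∣ a →
      ∃ y z : ℤ_[p], y ^ 2 + z ^ 2 = -2 := by
    intro a b hab ha
    have hunit : ‖(2 * a : ℤ_[p])‖ = 1 := by
      have h : ¬ (p : ℤ) ∣ 2 * a := fun h =>
        ((Nat.prime_iff_prime_int.1 hpp).dvd_or_dvd h).elim h2 ha
      refine le_antisymm (PadicInt.norm_le_one _) (not_lt.1 fun hlt => h ?_)
      exact PadicInt.norm_int_lt_one_iff_dvd _ |>.1 (by push_cast; exact hlt)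
    obtain ⟨z, hz⟩ := exists_sq_eq_of_norm_lt (-2 - (b : ℤ_[p]) ^ 2) (a : ℤ_[p]) (by
      rw [hunit, one_pow]
      have := (PadicInt.norm_int_lt_one_iff_dvd (p := p) _).2 hab
      push_cast at this
      convert this using 2
      ring)
    exact ⟨z, b, by rw [hz]; ring⟩
  obtain ⟨a, b, -, -, hab⟩ := Nat.sq_add_sq_zmodEq p (-2)
  have hd : (p : ℤ) ∣ (a : ℤ) ^ 2 + (b : ℤ) ^ 2 + 2 := by
    have := hab.symm.dvd
    simpa using this
  by_cases ha : (p : ℤ) ∣ a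
  · refine key b a (by rwa [add_comm ((b : ℤ) ^ 2)]) fun hb => h2 ?_
    have h := dvd_add (ha.pow two_ne_zero) (hb.pow two_ne_zero)
    exact (dvd_add_right h).1 hd
  · exact key a b hd ha

lemma exists_sq_eq_neg_seven : ∃ z : ℤ_[2], z ^ 2 = -7 := by
  refine exists_sq_eq_of_norm_lt (-7) 1 ?_
  have h2 : ‖(2 : ℤ_[2])‖ = 2⁻¹ := by simpa using PadicInt.norm_p (p := 2)
  have h8 : (1 : ℤ_[2]) ^ 2 - -7 = 2 ^ 3 := by norm_num
  rw [h8, mul_one, norm_pow, h2]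
  norm_num

/-- Everywhere-local solvability of Iskovskikh's equation
`y² + z² = (x² − 2)(3 − x²)`: it has solutions in `ℚ_[p]` for every prime `p`
and in `ℝ`. -/
theorem local_points_iskovskikh :
    (∀ (p : ℕ) [Fact p.Prime],
      ∃ x y z : ℚ_[p], y ^ 2 + z ^ 2 = (x ^ 2 - 2) * (3 - x ^ 2)) ∧
    (∃ x y z : ℝ, y ^ 2 + z ^ 2 = (x ^ 2 - 2) * (3 - x ^ 2)) := by
  refine ⟨fun p _ => ?_, √(5 / 2), 1 / 2, 0, ?_⟩
  · by_cases hp : p = 2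
    · subst hp
      obtain ⟨z, hz⟩ := exists_sq_eq_neg_seven
      have hz' : (z : ℚ_[2]) ^ 2 = -7 := by
        have := congrArg ((↑) : ℤ_[2] → ℚ_[2]) hz
        push_cast at this
        exact this
      exact ⟨0, 1, z, by rw [hz']; norm_num⟩
    · obtain ⟨y, z, h⟩ := exists_sq_add_sq_eq_neg_two hp
      have h' : (y : ℚ_[p]) ^ 2 + (z : ℚ_[p]) ^ 2 = -2 := by
        have := congrArg ((↑) : ℤ_[p] → ℚ_[p]) h
        push_cast at this
        exact this
      exact ⟨1, y, z, by rw [h']; norm_num⟩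
  · rw [Real.sq_sqrt (by norm_num)]
    norm_num
end
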